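/- arXiv:2206.09918 — 2 statements merged into one kernel-verified Lean document; each statement's English description precedes it below -/
import Mathlib

section
/- Let n be a positive integer and let G be a distribution on [0,1] that is a mean-preserving contraction of F and whose support contains at most n points. Then there exist 0 = d₀ ≤ d₁ ≤ … ≤ d_m = 1 with m ≤ n such that for each i = 0,…,m−1, ∫₀ˣ G(s) ds ≤ ∫₀ˣ F(s) ds for all x ∈ [d_i, d_{i+1}], and the inequality holds with equality only at x = d_i and x = d_{i+1}. -/
open MeasureTheory Set

noncomputable section

namespace VerifiableDisclosure

/-- The measure on `[0,1]` induced by a density `f`. -/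
def densMeasure (f : ℝ → ℝ) : Measure ℝ :=
  (volume.restrict (Icc (0:ℝ) 1)).withDensity (fun x => ENNReal.ofReal (f x))

/-- `f` is a strictly positive density on `[0,1]` inducing a probability measure. -/
structure IsPrior (f : ℝ → ℝ) : Prop where
  meas : Measurable f
  pos : ∀ x ∈ Icc (0:ℝ) 1, 0 < f x
  prob : densMeasure f univ = 1

/-- The CDF of a measure on `ℝ`. -/
def mcdf (μ : Measure ℝ) (x : ℝ) : ℝ := (μ (Iic x)).toReal

/-- The support of a measure on `ℝ`: points all of whose neighborhoods have positive mass. -/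
def msupport (μ : Measure ℝ) : Set ℝ := {x | ∀ U ∈ nhds x, μ U ≠ 0}

/-- `G` is a distribution on `[0,1]` that is a mean-preserving contraction of `μ`. -/
def IsMPC (μ G : Measure ℝ) : Prop :=
  IsProbabilityMeasure G ∧ msupport G ⊆ Icc (0:ℝ) 1 ∧
    (∀ x ∈ Icc (0:ℝ) 1, (∫ s in (0:ℝ)..x, mcdf G s) ≤ ∫ s in (0:ℝ)..x, mcdf μ s) ∧
    (∫ s in (0:ℝ)..(1:ℝ), mcdf G s) = ∫ s in (0:ℝ)..(1:ℝ), mcdf μ s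

/-- Conditional mean of `μ` on the set `B`. -/
def condMean (μ : Measure ℝ) (B : Set ℝ) : ℝ := (∫ ω in B, ω ∂μ) / (μ B).toReal

/-- `G` is a bi-pooling distribution relative to the prior `μ`. -/
def IsBiPooling (μ G : Measure ℝ) : Prop :=
  IsMPC μ G ∧
    ∃ (ι : Type) (a b : ι → ℝ),
      (∀ i, (0:ℝ) ≤ a i ∧ a i ≤ b i ∧ b i ≤ 1) ∧
      (Pairwise fun i j => Disjoint (Icc (a i) (b i)) (Icc (a j) (b j))) ∧
      (∀ i, G (Icc (a i) (b i)) = μ (Icc (a i) (b i))) ∧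
      (∀ i, (msupport (G.restrict (Icc (a i) (b i)))).encard ≤ 2) ∧
      (∀ s : Set ℝ, MeasurableSet s → s ⊆ Icc (0:ℝ) 1 \ (⋃ i, Icc (a i) (b i)) → G s = μ s)

/-- `G` is a bi-pooling solution of the information design problem with value function `u`. -/
def IsBiPoolingSolution (μ G : Measure ℝ) (u : ℝ → ℝ) : Prop :=
  IsBiPooling μ G ∧ ∀ G' : Measure ℝ, IsMPC μ G' → (∫ x, u x ∂G') ≤ ∫ x, u x ∂G

/-- A deterministic representation: closed sets covering `[0,1]`, pairwise `μ`-null overlaps. -/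
def IsDetRep (μ : Measure ℝ) (n : ℕ) (B : ℕ → Set ℝ) : Prop :=
  (∀ i < n, IsClosed (B i) ∧ B i ⊆ Icc (0:ℝ) 1) ∧
    (⋃ i ∈ Finset.range n, B i) = Icc (0:ℝ) 1 ∧
    (∀ i < n, ∀ j < n, i ≠ j → μ (B i ∩ B j) = 0)

/-- Incentive compatibility of a deterministic representation. -/
def IsIC (n : ℕ) (γ : ℕ → ℝ) (B : ℕ → Set ℝ) : Prop :=
  ∀ i < n, Icc (γ i) (γ (i+1)) ⊆ ⋃ j ∈ Finset.Ico i n, B j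

/-- Obedience of a deterministic representation. -/
def IsObedient (μ : Measure ℝ) (n : ℕ) (γ : ℕ → ℝ) (B : ℕ → Set ℝ) : Prop :=
  ∀ i < n, μ (B i) ≠ 0 → condMean μ (B i) ∈ Icc (γ i) (γ (i+1))

/-- `B` is a deterministic representation of the distribution `G`:
`G` places mass `μ (B i)` on the conditional mean of `B i`. -/
def IsDetRepOf (μ : Measure ℝ) (n : ℕ) (B : ℕ → Set ℝ) (G : Measure ℝ) : Prop :=
  IsDetRep μ n B ∧
    G = ∑ i ∈ Finset.range n, (μ (B i)) • Measure.dirac (condMean μ (B i))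

/-- `{BL, BH}` is a nested intervals pair. -/
def IsNestedPair (BL BH : Set ℝ) : Prop :=
  ∃ w₁ b₁ b₂ w₂ : ℝ, w₁ < b₁ ∧ b₁ ≤ b₂ ∧ b₂ < w₂ ∧
    BL = Icc b₁ b₂ ∧ BH = Icc w₁ b₁ ∪ Icc b₂ w₂

/-- A canonical representation of `G`: a deterministic representation of `G` in which every
element with nonempty interior is either an interval, or the outer member of a nested
intervals pair whose inner member has a lower index. -/
def IsCanonicalRep (μ : Measure ℝ) (n : ℕ) (B : ℕ → Set ℝ) (G : Measure ℝ) : Prop :=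
  IsDetRepOf μ n B G ∧
    ∀ i < n, (interior (B i)).Nonempty →
      (∃ c d : ℝ, B i = Icc c d) ∨ ∃ L < i, IsNestedPair (B L) (B i)

/-- Index `i` is skipped: `B i` has empty interior. -/
def Skipped (B : ℕ → Set ℝ) (i : ℕ) : Prop := interior (B i) = ∅

/-- A skipped index `i` is harmlessly skipped if `A i ⊆ ⋃_{k > i} B k`. -/
def HarmlesslySkipped (n : ℕ) (γ : ℕ → ℝ) (B : ℕ → Set ℝ) (i : ℕ) : Prop :=
  Icc (γ i) (γ (i+1)) ⊆ ⋃ k ∈ Finset.Ioo i n, B k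

/-- Laminar representation property. -/
def IsLaminar (n : ℕ) (B : ℕ → Set ℝ) : Prop :=
  ∀ i < n, B i = closure ((convexHull ℝ (B i)) \ ⋃ j ∈ Finset.range i, convexHull ℝ (B j))

/-- Sender's ex ante payoff of a deterministic representation. -/
def payoff (μ : Measure ℝ) (n : ℕ) (v : ℕ → ℝ) (B : ℕ → Set ℝ) : ℝ :=
  ∑ i ∈ Finset.range n, v i * (μ (B i)).toReal

/-- Conditional CDF of the prior with density `f` on the interval `[w₁, w₂]`. -/
def condCDF' (f : ℝ → ℝ) (w₁ w₂ x : ℝ) : ℝ :=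
  (mcdf (densMeasure f) x - mcdf (densMeasure f) w₁) /
    (mcdf (densMeasure f) w₂ - mcdf (densMeasure f) w₁)

/-- `{zL, zH}` is a feasible bi-pooling support for the interval `[w₁, w₂]`. -/
def FeasibleSupport (f : ℝ → ℝ) (w₁ w₂ zL zH : ℝ) : Prop :=
  ∃ G : Measure ℝ, IsProbabilityMeasure G ∧ msupport G ⊆ {zL, zH} ∧
    (∀ x ∈ Icc w₁ w₂, (∫ s in w₁..x, mcdf G s) ≤ ∫ s in w₁..x, condCDF' f w₁ w₂ s) ∧
    (∫ s in w₁..w₂, mcdf G s) = ∫ s in w₁..w₂, condCDF' f w₁ w₂ s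


/-!
Let `D x = ∫₀ˣ (F - G)`, so that `D ≥ 0` on `[0,1]` and the constraint binds where `D = 0`. If `G`
puts no mass strictly between two binding points `x < y`, its CDF is constant there, so `F - G` is
strictly increasing on `(x,y)` with zero integral; its partial integrals from `x` are then
negative, contradicting `D ≥ 0`. Hence binding points interleave with support points, there are at
most `n + 1` of them, and they cut `[0,1]` into the required intervals.
-/

/-- The points of `[0,1]` at which the mean-preserving-contraction constraint of `G` relative to
`μ` holds with equality; they are the endpoints of the partition. -/
def bindingSet (μ G : Measure ℝ) : Set ℝ :=
  {x ∈ Icc (0 : ℝ) 1 | (∫ s in (0 : ℝ)..x, mcdf G s) = ∫ s in (0 : ℝ)..x, mcdf μ s}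

section Order

variable {α : Type*} [LinearOrder α] {Z S : Set α}

lemma encard_le_encard_add_one_of_interleaved
    (h : ∀ x ∈ Z, ∀ y ∈ Z, x < y → (S ∩ Ioo x y).Nonempty) :
    Z.encard ≤ S.encard + 1 := by
  rcases S.finite_or_infinite with hS | hS
  · by_contra! hlt
    obtain ⟨T, hTZ, hT⟩ := exists_subset_encard_eq (Order.add_one_le_of_lt hlt)
    lift S to Finset α using hS
    rw [encard_coe_eq_coe_finsetCard] at hT
    lift T to Finset α using finite_of_encard_eq_coe (k := S.card + 1 + 1) (mod_cast hT)
    have hle : T.card ≤ S.card + 1 := Finset.card_le_of_interleaved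
      fun x hx y hy hxy _ ↦ h x (hTZ hx) y (hTZ hy) hxy
    rw [encard_coe_eq_coe_finsetCard] at hT
    norm_cast at hT
    omega
  · simp [hS.encard_eq]

lemma exists_consecutive_enumeration (hZ : Z.Finite) {a b : α} (ha : IsLeast Z a)
    (hb : IsGreatest Z b) :
    ∃ (m : ℕ) (d : ℕ → α), Z.encard = m + 1 ∧ d 0 = a ∧ d m = b ∧ (∀ i, d i ∈ Z) ∧
      ∀ i < m, d i < d (i + 1) ∧ Disjoint Z (Ioo (d i) (d (i + 1))) := by
  lift Z to Finset α using hZ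
  obtain ⟨m, hm⟩ : ∃ m, Z.card = m + 1 :=
    Nat.exists_eq_add_one.mpr (Finset.card_pos.mpr ⟨a, ha.1⟩)
  let e := Z.orderEmbOfFin hm
  have e_mem : ∀ i, e i ∈ Z := Z.orderEmbOfFin_mem hm
  have e_surj : ∀ x ∈ Z, ∃ j, e j = x := fun x hx ↦
    (Z.range_orderEmbOfFin hm).ge (Finset.mem_coe.mpr hx)
  refine ⟨m, fun i ↦ e (Fin.clamp i m), mod_cast hm, ?_, ?_, fun i ↦ e_mem _,
    fun i hi ↦ ⟨e.strictMono ?_, ?_⟩⟩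
  · obtain ⟨j, rfl⟩ := e_surj a ha.1
    exact le_antisymm (e.monotone (by simp [Fin.le_def])) (ha.2 (e_mem _))
  · obtain ⟨j, rfl⟩ := e_surj b hb.1
    exact le_antisymm (hb.2 (e_mem _)) (e.monotone (by simp [Fin.le_def, j.is_le]))
  · simp only [Fin.lt_def, Fin.coe_clamp]
    omega
  · refine disjoint_left.mpr fun x hx hxi ↦ ?_
    obtain ⟨j, rfl⟩ := e_surj x hx
    have hij := e.lt_iff_lt.mp hxi.1
    have hji := e.lt_iff_lt.mp hxi.2
    simp only [Fin.lt_def, Fin.coe_clamp] at hij hji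
    omega

end Order

lemma integral_neg_of_strictMonoOn_of_integral_eq_zero {h : ℝ → ℝ} {a b p : ℝ}
    (hmono : StrictMonoOn h (Ioo a b)) (hint : IntervalIntegrable h volume a b)
    (hzero : ∫ s in a..b, h s = 0) (hp : p ∈ Ioo a b) :
    ∫ s in a..p, h s < 0 := by
  have hp' : p ∈ uIcc a b := Icc_subset_uIcc (Ioo_subset_Icc_self hp)
  have hap : IntervalIntegrable h volume a p :=
    hint.mono_set (uIcc_subset_uIcc left_mem_uIcc hp')
  have hpb : IntervalIntegrable h volume p b :=
    hint.mono_set (uIcc_subset_uIcc hp' right_mem_uIcc)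
  have hsplit := intervalIntegral.integral_add_adjacent_intervals hap hpb
  rcases le_total (h p) 0 with hnonpos | hnonneg
  · have hpos : 0 < ∫ s in a..p, -h s :=
      intervalIntegral.intervalIntegral_pos_of_pos_on hap.neg
        (fun s hs ↦ neg_pos.mpr
          ((hmono ⟨hs.1, hs.2.trans hp.2⟩ hp hs.2).trans_le hnonpos)) hp.1
    rwa [intervalIntegral.integral_neg, neg_pos] at hpos
  · have hpos : 0 < ∫ s in p..b, h s :=
      intervalIntegral.intervalIntegral_pos_of_pos_on hpb
        (fun s hs ↦ hnonneg.trans_lt (hmono hp ⟨hp.1.trans hs.1, hs.2⟩ hs.1)) hp.2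
    linarith

section CDF

variable {μ G : Measure ℝ}

lemma mcdf_mono [IsFiniteMeasure μ] : Monotone (mcdf μ) :=
  fun _ _ hxy ↦ measureReal_mono (Iic_subset_Iic.mpr hxy)

lemma strictMonoOn_mcdf_of_absolutelyContinuous [IsFiniteMeasure μ] {a b : ℝ}
    (hμ : volume.restrict (Icc a b) ≪ μ) : StrictMonoOn (mcdf μ) (Icc a b) := by
  intro x hx y hy hxy
  have hpos : 0 < μ.real (Ioc x y) := by
    refine ENNReal.toReal_pos (fun hnull ↦ ?_) (measure_ne_top μ _)
    have hvol := hμ hnull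
    rw [Measure.restrict_eq_self _ (Ioc_subset_Icc_self.trans (Icc_subset_Icc hx.1 hy.2)),
      Real.volume_Ioc, ENNReal.ofReal_eq_zero] at hvol
    linarith
  calc mcdf μ x < μ.real (Iic x) + μ.real (Ioc x y) := lt_add_of_pos_right _ hpos
    _ = mcdf μ y := by
      rw [← measureReal_union (Iic_disjoint_Ioc le_rfl) measurableSet_Ioc,
        Iic_union_Ioc_eq_Iic hxy.le]
      rfl

lemma msupport_eq_support : msupport G = G.support := by
  ext x
  simp only [msupport, mem_ofPred_eq, Measure.mem_support_iff_forall, pos_iff_ne_zero]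

lemma mcdf_eq_of_disjoint_msupport {x y s t : ℝ} (h : Disjoint (msupport G) (Ioo x y))
    (hs : s ∈ Ioo x y) (ht : t ∈ Ioo x y) : mcdf G s = mcdf G t := by
  wlog hst : s ≤ t generalizing s t
  · exact (this ht hs (le_of_not_ge hst)).symm
  have hnull : G (Ioc s t) = 0 := by
    refine measure_mono_null ?_ (Measure.measure_compl_support (μ := G))
    rw [← msupport_eq_support]
    exact fun u hu ↦ h.notMem_of_mem_right ⟨hs.1.trans hu.1, hu.2.trans_lt ht.2⟩
  rw [mcdf, mcdf, ← Iic_union_Ioc_eq_Iic hst,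
    measure_union (Iic_disjoint_Ioc le_rfl) measurableSet_Ioc, hnull, add_zero]

end CDF

section Contraction

variable {μ G : Measure ℝ}

lemma intervalIntegrable_mcdf_sub (hμ : MonotoneOn (mcdf μ) (Icc 0 1)) [IsFiniteMeasure G]
    {x y : ℝ} (hx : x ∈ Icc (0 : ℝ) 1) (hy : y ∈ Icc (0 : ℝ) 1) :
    IntervalIntegrable (fun s ↦ mcdf μ s - mcdf G s) volume x y :=
  (hμ.mono (ordConnected_Icc.uIcc_subset hx hy)).intervalIntegrable.sub
    mcdf_mono.intervalIntegrable

lemma integral_mcdf_sub_eq (hμ : MonotoneOn (mcdf μ) (Icc 0 1)) [IsFiniteMeasure G]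
    {x y : ℝ} (hx : x ∈ Icc (0 : ℝ) 1) (hy : y ∈ Icc (0 : ℝ) 1) :
    ∫ s in x..y, (mcdf μ s - mcdf G s) =
      ((∫ s in (0 : ℝ)..y, mcdf μ s) - ∫ s in (0 : ℝ)..y, mcdf G s) -
        ((∫ s in (0 : ℝ)..x, mcdf μ s) - ∫ s in (0 : ℝ)..x, mcdf G s) := by
  have h0 : (0 : ℝ) ∈ Icc (0 : ℝ) 1 := left_mem_Icc.mpr zero_le_one
  have hμint : ∀ z ∈ Icc (0 : ℝ) 1, IntervalIntegrable (mcdf μ) volume 0 z := fun z hz ↦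
    (hμ.mono (ordConnected_Icc.uIcc_subset h0 hz)).intervalIntegrable
  have hGint : ∀ z, IntervalIntegrable (mcdf G) volume 0 z := fun z ↦
    mcdf_mono.intervalIntegrable
  rw [← intervalIntegral.integral_sub (hμint y hy) (hGint y),
    ← intervalIntegral.integral_sub (hμint x hx) (hGint x),
    intervalIntegral.integral_interval_sub_left ((hμint y hy).sub (hGint y))
      ((hμint x hx).sub (hGint x))]

lemma msupport_inter_Ioo_nonempty_of_mem_bindingSet (hμ : StrictMonoOn (mcdf μ) (Icc 0 1))
    (hG : IsMPC μ G) {x y : ℝ} (hx : x ∈ bindingSet μ G) (hy : y ∈ bindingSet μ G)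
    (hxy : x < y) : (msupport G ∩ Ioo x y).Nonempty := by
  by_contra hempty
  have hgap : Disjoint (msupport G) (Ioo x y) :=
    disjoint_iff_inter_eq_empty.mpr (not_nonempty_iff_eq_empty.mp hempty)
  have := hG.1
  have hsub : Ioo x y ⊆ Icc 0 1 := Ioo_subset_Icc_self.trans (Icc_subset_Icc hx.1.1 hy.1.2)
  have hmono : StrictMonoOn (fun s ↦ mcdf μ s - mcdf G s) (Ioo x y) := fun s hs t ht hst ↦ by
    simpa only [mcdf_eq_of_disjoint_msupport hgap hs ht, sub_lt_sub_iff_right] using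
      hμ (hsub hs) (hsub ht) hst
  have hzero : ∫ s in x..y, (mcdf μ s - mcdf G s) = 0 := by
    rw [integral_mcdf_sub_eq hμ.monotoneOn hx.1 hy.1, hx.2, hy.2, sub_self, sub_self, sub_self]
  obtain ⟨p, hp⟩ := nonempty_Ioo.mpr hxy
  have hneg := integral_neg_of_strictMonoOn_of_integral_eq_zero hmono
    (intervalIntegrable_mcdf_sub hμ.monotoneOn hx.1 hy.1) hzero hp
  rw [integral_mcdf_sub_eq hμ.monotoneOn hx.1 (hsub hp), hx.2, sub_self, sub_zero] at hneg
  exact hneg.not_ge (sub_nonneg.mpr (hG.2.2.1 p (hsub hp)))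

lemma isLeast_bindingSet : IsLeast (bindingSet μ G) 0 :=
  ⟨⟨left_mem_Icc.mpr zero_le_one, by simp only [intervalIntegral.integral_same]⟩,
    fun _ hx ↦ hx.1.1⟩

lemma IsMPC.isGreatest_bindingSet (hG : IsMPC μ G) : IsGreatest (bindingSet μ G) 1 :=
  ⟨⟨right_mem_Icc.mpr zero_le_one, hG.2.2.2⟩, fun _ hx ↦ hx.1.2⟩

theorem mpc_partition_intervals_general (hμ : StrictMonoOn (mcdf μ) (Icc 0 1))
    (hG : IsMPC μ G) {n : ℕ} (hsupp : (msupport G).encard ≤ (n : ℕ∞)) :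
    ∃ m ≤ n, ∃ d : ℕ → ℝ, d 0 = 0 ∧ d m = 1 ∧ (∀ i < m, d i < d (i + 1)) ∧
      ∀ i < m,
        (∀ x ∈ Icc (d i) (d (i + 1)),
          (∫ s in (0 : ℝ)..x, mcdf G s) ≤ ∫ s in (0 : ℝ)..x, mcdf μ s) ∧
        (∀ x ∈ Icc (d i) (d (i + 1)),
          (∫ s in (0 : ℝ)..x, mcdf G s) = (∫ s in (0 : ℝ)..x, mcdf μ s) →
            x = d i ∨ x = d (i + 1)) := by
  have hcard : (bindingSet μ G).encard ≤ ((n + 1 : ℕ) : ℕ∞) :=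
    (encard_le_encard_add_one_of_interleaved fun _ hx _ hy hxy ↦
      msupport_inter_Ioo_nonempty_of_mem_bindingSet hμ hG hx hy hxy).trans (by push_cast; gcongr)
  obtain ⟨m, d, hm, hd0, hdm, hd, hgap⟩ := exists_consecutive_enumeration
    (finite_of_encard_le_coe hcard) isLeast_bindingSet hG.isGreatest_bindingSet
  have hmn : m ≤ n := by
    rw [hm] at hcard
    exact Nat.le_of_add_le_add_right (mod_cast hcard)
  refine ⟨m, hmn, d, hd0, hdm, fun i hi ↦ (hgap i hi).1, fun i hi ↦ ?_⟩
  have hsub : Icc (d i) (d (i + 1)) ⊆ Icc 0 1 := Icc_subset_Icc (hd i).1.1 (hd (i + 1)).1.2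
  refine ⟨fun x hx ↦ hG.2.2.1 x (hsub hx), fun x hx hbind ↦ ?_⟩
  rcases eq_endpoints_or_mem_Ioo_of_mem_Icc hx with hleft | hright | hxi
  · exact Or.inl hleft
  · exact Or.inr hright
  · exact absurd hxi ((hgap i hi).2.notMem_of_mem_left ⟨hsub hx, hbind⟩)

end Contraction

lemma IsPrior.strictMonoOn_mcdf {f : ℝ → ℝ} (hf : IsPrior f) :
    StrictMonoOn (mcdf (densMeasure f)) (Icc 0 1) := by
  have : IsProbabilityMeasure (densMeasure f) := ⟨hf.prob⟩
  refine strictMonoOn_mcdf_of_absolutelyContinuous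
    (withDensity_absolutelyContinuous' hf.meas.ennreal_ofReal.aemeasurable ?_)
  filter_upwards [ae_restrict_mem measurableSet_Icc] with x hx
  exact (ENNReal.ofReal_pos.mpr (hf.pos x hx)).ne'

/-- an MPC of the prior with at most `n` support points partitions
`[0,1]` into at most `n` intervals on which the MPC constraint binds only at the
endpoints. -/
theorem mpc_partition_intervals
    (f : ℝ → ℝ) (hf : IsPrior f) (n : ℕ) (hn : 0 < n)
    (G : Measure ℝ) (hG : IsMPC (densMeasure f) G)
    (hsupp : (msupport G).encard ≤ (n : ℕ∞)) :
    ∃ m ≤ n, ∃ d : ℕ → ℝ, d 0 = 0 ∧ d m = 1 ∧ (∀ i < m, d i ≤ d (i+1)) ∧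
      ∀ i < m,
        (∀ x ∈ Icc (d i) (d (i+1)),
          (∫ s in (0:ℝ)..x, mcdf G s) ≤ ∫ s in (0:ℝ)..x, mcdf (densMeasure f) s) ∧
        (∀ x ∈ Icc (d i) (d (i+1)),
          (∫ s in (0:ℝ)..x, mcdf G s) = (∫ s in (0:ℝ)..x, mcdf (densMeasure f) s) →
            x = d i ∨ x = d (i+1)) := by
  obtain ⟨m, hmn, d, hd0, hdm, hlt, hd⟩ :=
    mpc_partition_intervals_general hf.strictMonoOn_mcdf hG hsupp
  exact ⟨m, hmn, d, hd0, hdm, fun i hi ↦ (hlt i hi).le, hd⟩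

end VerifiableDisclosure
end
end

section
/- Let G be a mean-preserving contraction of F with finite support {x₁ < x₂ < ⋯ < x_k}. Then there exist closed sets B₁,…,B_k ⊆ [0,1] with ∪_i B_i = [0,1] and μ_F(B_i ∩ B_j) = 0 for all i ≠ j, such that μ_F(B_i) = G({x_i}) and E[ω | ω ∈ B_i] = x_i for each i, and B_i = cl(conv(B_i) \ ∪_{j<i} conv(B_j)) for each i; that is, G induces a laminar representation. -/
open MeasureTheory Set

noncomputable section

namespace VerifiableDisclosure

/-!
Write `μ` for the prior. In terms of the potentials `t ↦ ∫ (t - ω)⁺`, an MPC of `μ` is smaller than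
`μ` in the convex order. Fix an atom `x` of `G`, of mass `p`. Evaluating the order at the functions
`(t - ω)⁺` and `(ω - t)⁺` shows that the lowest `p`-quantile of `μ` has mean at most `x` and the
highest one has mean at least `x`. So by the intermediate value theorem some interval of mass `p`
has mean exactly `x`. Deleting the atom from `G` and the interval from `μ` preserves the convex
order: outside the interval both potentials drop by the same amount, while across it the potential
of the remaining prior is affine and that of the remaining atoms convex. Hence the atoms can be
served one after another, in any order. The `i`-th set is the closure of the `i`-th interval minus
the earlier ones. Its convex hull lies between this difference and the interval, so hulls and
intervals leave the same differences, which is the laminar property.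
-/

section Potential

variable {ν : Measure ℝ} {a b c d t : ℝ}

/-- The potential `t ↦ ∫ (t - ω)⁺ dν(ω)` of a measure on the line, i.e. its integrated distribution
function (`integral_mcdf_eq_potential`). -/
def potential (ν : Measure ℝ) (t : ℝ) : ℝ := ∫ ω, max (t - ω) 0 ∂ν

lemma potential_nonneg (ν : Measure ℝ) (t : ℝ) : 0 ≤ potential ν t :=
  integral_nonneg fun _ ↦ le_max_right _ _

lemma potential_eq_zero_of_ae_ge (h : ∀ᵐ ω ∂ν, t ≤ ω) : potential ν t = 0 := by
  refine integral_eq_zero_of_ae ?_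
  filter_upwards [h] with ω hω using max_eq_right (sub_nonpos.2 hω)

variable [IsFiniteMeasure ν]

lemma integrable_id_of_ae_mem_Icc (hν : ∀ᵐ ω ∂ν, ω ∈ Icc c d) : Integrable (fun ω ↦ ω) ν :=
  .of_mem_Icc c d aemeasurable_id hν

lemma integrable_max_sub_zero (hid : Integrable (fun ω ↦ ω) ν) (t : ℝ) :
    Integrable (fun ω ↦ max (t - ω) 0) ν :=
  ((integrable_const t).sub hid).pos_part

lemma potential_of_ae_le (hid : Integrable (fun ω ↦ ω) ν) (h : ∀ᵐ ω ∂ν, ω ≤ t) :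
    potential ν t = t * ν.real univ - ∫ ω, ω ∂ν := by
  calc potential ν t = ∫ ω, (t - ω) ∂ν := by
        refine integral_congr_ae ?_
        filter_upwards [h] with ω hω using max_eq_left (sub_nonneg.2 hω)
    _ = t * ν.real univ - ∫ ω, ω ∂ν := by
        rw [integral_sub (integrable_const t) hid, integral_const, smul_eq_mul, mul_comm]

lemma potential_restrict_add_compl (hid : Integrable (fun ω ↦ ω) ν) {s : Set ℝ}
    (hs : MeasurableSet s) (t : ℝ) :
    potential (ν.restrict s) t + potential (ν.restrict sᶜ) t = potential ν t :=
  integral_add_compl hs (integrable_max_sub_zero hid t)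

lemma potential_eq (hid : Integrable (fun ω ↦ ω) ν) (t : ℝ) :
    potential ν t = t * ν.real (Iic t) - ∫ ω in Iic t, ω ∂ν := by
  rw [← potential_restrict_add_compl hid (measurableSet_Iic (a := t)), compl_Iic,
    potential_of_ae_le (ν := ν.restrict (Iic t)) hid.restrict (ae_restrict_mem measurableSet_Iic),
    potential_eq_zero_of_ae_ge ((ae_restrict_mem measurableSet_Ioi).mono fun _ ↦ le_of_lt),
    measureReal_restrict_apply_univ, add_zero]

lemma potential_add_eq_setIntegral_Ioi (hid : Integrable (fun ω ↦ ω) ν) (t : ℝ) :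
    potential ν t + ((∫ ω, ω ∂ν) - t * ν.real univ) =
      (∫ ω in Ioi t, ω ∂ν) - t * ν.real (Ioi t) := by
  rw [potential_eq hid, ← integral_add_compl (measurableSet_Iic (a := t)) hid,
    ← measureReal_add_measureReal_compl (measurableSet_Iic (a := t)), compl_Iic]
  ring

lemma potential_add_eq_integral_max (hid : Integrable (fun ω ↦ ω) ν) (t : ℝ) :
    potential ν t + ((∫ ω, ω ∂ν) - t * ν.real univ) = ∫ ω, max (ω - t) 0 ∂ν := by
  have hsplit (ω : ℝ) : max (ω - t) 0 = max (t - ω) 0 + (ω - t) := by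
    rw [max_add, sub_add_sub_cancel, sub_self, zero_add, max_comm]
  have hsub : Integrable (fun ω ↦ ω - t) ν := hid.sub (integrable_const t)
  simp only [hsplit]
  rw [integral_add (integrable_max_sub_zero hid t) hsub,
    integral_sub hid (integrable_const t), integral_const, smul_eq_mul, mul_comm t, potential]

lemma potential_eq_of_measure_Ioc_eq_zero (hid : Integrable (fun ω ↦ ω) ν)
    (hab : ν (Ioc a b) = 0) (ht : t ∈ Icc a b) :
    potential ν t = t * ν.real (Iic a) - ∫ ω in Iic a, ω ∂ν := by
  have hae : Iic t =ᵐ[ν] Iic a := by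
    rw [← Iic_union_Ioc_eq_Iic ht.1]
    exact union_ae_eq_left_of_ae_eq_empty
      (ae_eq_empty.2 (measure_mono_null (Ioc_subset_Ioc_right ht.2) hab))
  rw [potential_eq hid, measureReal_congr hae, setIntegral_congr_set hae]

lemma convexOn_potential (hid : Integrable (fun ω ↦ ω) ν) : ConvexOn ℝ univ (potential ν) := by
  refine ⟨convex_univ, fun s _ t _ α β hα hβ hαβ ↦ ?_⟩
  have hint := integrable_max_sub_zero hid
  calc potential ν (α • s + β • t)
      ≤ ∫ ω, (α * max (s - ω) 0 + β * max (t - ω) 0) ∂ν := by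
        refine integral_mono (hint _) (((hint s).const_mul α).add ((hint t).const_mul β)) fun ω ↦ ?_
        have hω : α • s + β • t - ω = α * (s - ω) + β * (t - ω) := by
          simp only [smul_eq_mul]; linear_combination ω * hαβ
        simp only [hω]
        exact max_le (by gcongr <;> exact le_max_left _ _) (by positivity)
    _ = α • potential ν s + β • potential ν t := by
        rw [integral_add ((hint s).const_mul α) ((hint t).const_mul β), integral_const_mul,
          integral_const_mul]
        rfl

lemma potential_le_potential_of_measure_Ioc_eq_zero {G : Measure ℝ} [IsFiniteMeasure G]
    (hG : Integrable (fun ω ↦ ω) G) (hν : Integrable (fun ω ↦ ω) ν) (hab : ν (Ioc a b) = 0)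
    (ha : potential G a ≤ potential ν a) (hb : potential G b ≤ potential ν b) (ht : t ∈ Icc a b) :
    potential G t ≤ potential ν t := by
  have haffine (s : ℝ) (hs : s ∈ Icc a b) :=
    potential_eq_of_measure_Ioc_eq_zero hν hab hs
  set ℓ : ℝ → ℝ := fun s ↦ s * ν.real (Iic a) - ∫ ω in Iic a, ω ∂ν with hℓ
  have hℓ_concave : ConcaveOn ℝ univ ℓ :=
    ⟨convex_univ, fun s _ t _ α β _ _ hαβ ↦ by
      simp only [hℓ, smul_eq_mul]; linear_combination (-∫ ω in Iic a, ω ∂ν) * hαβ⟩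
  have hab' : a ≤ b := ht.1.trans ht.2
  have hmax := ((convexOn_potential hG).sub hℓ_concave).le_max_of_mem_Icc (mem_univ a)
    (mem_univ b) ht
  rw [haffine a (left_mem_Icc.2 hab')] at ha
  rw [haffine b (right_mem_Icc.2 hab')] at hb
  rw [haffine t ht]
  exact sub_nonpos.1 (hmax.trans (max_le (sub_nonpos.2 ha) (sub_nonpos.2 hb)))

lemma integral_mcdf_eq_potential (hid : Integrable (fun ω ↦ ω) ν) (hν : ∀ᵐ ω ∂ν, c ≤ ω)
    (hct : c ≤ t) : ∫ s in c..t, mcdf ν s = potential ν t := by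
  have hzero : ∀ s ∈ Iic t \ Ioc c t, s ≠ c → mcdf ν s = 0 := by
    intro s hs hsc
    have hlt : s < c := lt_of_le_of_ne (not_lt.1 fun h ↦ hs.2 ⟨h, hs.1⟩) hsc
    have : ν (Iic s) = 0 := measure_mono_null
      (fun ω (hω : ω ≤ s) ↦ not_le.2 (hω.trans_lt hlt)) hν
    simp [mcdf, this]
  have hlayer : ∀ u ∈ Ioi (0 : ℝ), ν.real {ω | u ≤ max (t - ω) 0} = mcdf ν (t - u) := by
    intro u (hu : 0 < u)
    have : {ω | u ≤ max (t - ω) 0} = Iic (t - u) := by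
      ext ω; simp [hu.not_ge, le_sub_comm]
    rw [this]; rfl
  calc ∫ s in c..t, mcdf ν s = ∫ s in Ioc c t, mcdf ν s := intervalIntegral.integral_of_le hct
    _ = ∫ s in Iic t, mcdf ν s := by
        refine (setIntegral_eq_of_subset_of_ae_sdiff_eq_zero measurableSet_Iic.nullMeasurableSet
          Ioc_subset_Iic_self ?_).symm
        filter_upwards [Measure.ae_ne volume c] with s hsc hs using hzero s hs hsc
    _ = ∫ u in Ioi 0, mcdf ν (t - u) := by
        rw [← integral_Ici_eq_integral_Ioi, ← (Measure.measurePreserving_sub_left volume t)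
          |>.setIntegral_preimage_emb (MeasurableEquiv.subLeft t).measurableEmbedding,
          preimage_const_sub_Iic, sub_self]
    _ = potential ν t := by
        rw [← setIntegral_congr_fun measurableSet_Ioi hlayer]
        exact ((integrable_max_sub_zero hid t).integral_eq_integral_meas_le
          (.of_forall fun _ ↦ le_max_right _ _)).symm

end Potential

section Window

lemma exists_sub_eq_and_sub_eq {N K : ℝ → ℝ} {c d C p m : ℝ} (hcd : c ≤ d)
    (hN : ContinuousOn N (Icc c d))
    (hK : ∀ s ∈ Icc c d, ∀ t ∈ Icc c d, |K s - K t| ≤ C * |N s - N t|)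
    (hp : p ∈ Icc 0 (N d - N c))
    (hlow : ∀ t ∈ Icc c d, N t = N c + p → K t - K c ≤ m)
    (hhigh : ∀ t ∈ Icc c d, N t = N d - p → m ≤ K d - K t) :
    ∃ a ∈ Icc c d, ∃ b ∈ Icc c d, N b - N a = p ∧ K b - K a = m := by
  obtain ⟨hp0, hp1⟩ := hp
  have hsurj : SurjOn N (Icc c d) (Icc (N c) (N d)) := intermediate_value_Icc hcd hN
  -- A generalized inverse of `N`: it may jump, but `K` is constant where `N` is.
  set q := Function.invFunOn N (Icc c d)
  have hq : MapsTo q (Icc (N c) (N d)) (Icc c d) := hsurj.mapsTo_invFunOn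
  have hNq : ∀ u ∈ Icc (N c) (N d), N (q u) = u := hsurj.rightInvOn_invFunOn
  have hK_eq : ∀ s ∈ Icc c d, ∀ t ∈ Icc c d, N s = N t → K s = K t := fun s hs t ht h ↦ by
    simpa [h, sub_eq_zero] using hK s hs t ht
  have hKq : ContinuousOn (fun u ↦ K (q u)) (Icc (N c) (N d)) := by
    refine (LipschitzOnWith.of_dist_le_mul (K := C.toNNReal) fun u hu v hv ↦ ?_).continuousOn
    calc |K (q u) - K (q v)| ≤ C * |N (q u) - N (q v)| := hK _ (hq hu) _ (hq hv)
      _ = C * |u - v| := by rw [hNq u hu, hNq v hv]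
      _ ≤ C.toNNReal * |u - v| := by gcongr; exact C.le_coe_toNNReal
  have hmem : ∀ u ∈ Icc (N c) (N d - p), u ∈ Icc (N c) (N d) ∧ u + p ∈ Icc (N c) (N d) :=
    fun u hu ↦ ⟨⟨hu.1, by linarith [hu.2]⟩, by linarith [hu.1], by linarith [hu.2]⟩
  have hcont : ContinuousOn (fun u ↦ K (q (u + p)) - K (q u)) (Icc (N c) (N d - p)) :=
    (hKq.comp (by fun_prop) fun u hu ↦ (hmem u hu).2).sub (hKq.mono fun u hu ↦ (hmem u hu).1)
  have hlow' : K (q (N c + p)) - K (q (N c)) ≤ m := by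
    obtain ⟨hc, hcp⟩ := hmem (N c) ⟨le_rfl, by linarith⟩
    rw [hK_eq _ (hq hc) c (left_mem_Icc.2 hcd) (hNq _ hc)]
    exact hlow _ (hq hcp) (hNq _ hcp)
  have hhigh' : m ≤ K (q (N d - p + p)) - K (q (N d - p)) := by
    obtain ⟨hdp, hd⟩ := hmem (N d - p) ⟨by linarith, le_rfl⟩
    rw [hK_eq _ (hq hd) d (right_mem_Icc.2 hcd) ((hNq _ hd).trans (sub_add_cancel _ _))]
    exact hhigh _ (hq hdp) (hNq _ hdp)
  obtain ⟨u, hu, hum⟩ := intermediate_value_Icc (by linarith) hcont ⟨hlow', hhigh'⟩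
  obtain ⟨hu₁, hu₂⟩ := hmem u hu
  exact ⟨q u, hq hu₁, q (u + p), hq hu₂, by rw [hNq _ hu₁, hNq _ hu₂]; ring, hum⟩

variable {ν : Measure ℝ} [IsFiniteMeasure ν] {a b c d : ℝ}

lemma measureReal_Iic_sub_Iic (hab : a ≤ b) :
    ν.real (Iic b) - ν.real (Iic a) = ν.real (Ioc a b) := by
  rw [← Iic_union_Ioc_eq_Iic hab, measureReal_union (Iic_disjoint_Ioc le_rfl) measurableSet_Ioc,
    add_sub_cancel_left]

lemma continuous_measureReal_Iic [NullSingletonClass ν] : Continuous fun t ↦ ν.real (Iic t) := by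
  have h (t : ℝ) : ν.real (Iic t) = ν.real (Iic 0) + ∫ _ in (0 : ℝ)..t, (1 : ℝ) ∂ν := by
    rw [← intervalIntegral.integral_Iic_sub_Iic (by simp) (by simp)]
    simp
  exact (continuous_const.add ((integrable_const (1 : ℝ)).continuous_primitive 0)).congr
    fun t ↦ (h t).symm

lemma abs_setIntegral_Iic_sub_le (hν : ∀ᵐ ω ∂ν, ω ∈ Icc c d) (s t : ℝ) :
    |(∫ ω in Iic s, ω ∂ν) - ∫ ω in Iic t, ω ∂ν| ≤
      max |c| |d| * |ν.real (Iic s) - ν.real (Iic t)| := by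
  wlog hts : t ≤ s generalizing s t
  · rw [abs_sub_comm, abs_sub_comm (ν.real _)]
    exact this t s (le_of_not_ge hts)
  have hid := integrable_id_of_ae_mem_Icc hν
  rw [intervalIntegral.integral_Iic_sub_Iic hid.integrableOn hid.integrableOn,
    intervalIntegral.integral_of_le hts, measureReal_Iic_sub_Iic hts,
    abs_of_nonneg measureReal_nonneg, ← Real.norm_eq_abs]
  refine norm_setIntegral_le_of_norm_le_const_ae (measure_lt_top ν _) (ae_restrict_of_ae ?_)
  filter_upwards [hν] with ω hω using abs_le_max_abs_abs hω.1 hω.2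

lemma exists_Icc_measureReal_eq_and_setIntegral_eq [NullSingletonClass ν] {p m : ℝ} (hcd : c ≤ d)
    (hν : ∀ᵐ ω ∂ν, ω ∈ Icc c d) (hp : p ∈ Ioc 0 (ν.real univ))
    (hlow : ∀ t, ν.real (Iic t) = p → ∫ ω in Iic t, ω ∂ν ≤ m)
    (hhigh : ∀ t, ν.real (Ioi t) = p → m ≤ ∫ ω in Ioi t, ω ∂ν) :
    ∃ a ∈ Icc c d, ∃ b ∈ Icc c d, ν.real (Icc a b) = p ∧ ∫ ω in Icc a b, ω ∂ν = m := by
  have hid := integrable_id_of_ae_mem_Icc hν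
  have hc : Iic c =ᵐ[ν] (∅ : Set ℝ) := by
    refine ae_eq_empty.2 (measure_mono_null (t := {c} ∪ {ω | ω ∉ Icc c d}) (fun ω hω ↦ ?_)
      (measure_union_null (measure_singleton c) hν))
    exact (eq_or_lt_of_le hω).imp id fun h hω' ↦ h.not_ge hω'.1
  have hd : Iic d =ᵐ[ν] univ := by
    filter_upwards [hν] with ω hω using eq_true hω.2
  have hNc : ν.real (Iic c) = 0 := by simp [measureReal_congr hc]
  have hNd : ν.real (Iic d) = ν.real univ := measureReal_congr hd
  have hKc : ∫ ω in Iic c, ω ∂ν = 0 := by simp [setIntegral_congr_set hc]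
  have hKd : ∫ ω in Iic d, ω ∂ν = ∫ ω, ω ∂ν := by simp [setIntegral_congr_set hd]
  obtain ⟨a, ha, b, hb, hmass, hmean⟩ := exists_sub_eq_and_sub_eq (m := m) hcd
    (continuous_measureReal_Iic (ν := ν)).continuousOn
    (fun s _ t _ ↦ abs_setIntegral_Iic_sub_le hν s t)
    (by simpa only [hNc, hNd, sub_zero] using Ioc_subset_Icc_self hp)
    (fun t _ ht ↦ by simpa only [hKc, sub_zero] using hlow t (by rwa [hNc, zero_add] at ht))
    (fun t _ ht ↦ by
      rw [hKd, ← integral_add_compl (measurableSet_Iic (a := t)) hid, add_sub_cancel_left,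
        compl_Iic]
      refine hhigh t ?_
      rw [← compl_Iic, measureReal_compl measurableSet_Iic, ht, hNd, sub_sub_cancel])
  have hab : a ≤ b := by
    by_contra! hba
    linarith [hp.1, measureReal_mono (μ := ν) (Iic_subset_Iic.2 hba.le)]
  refine ⟨a, ha, b, hb, ?_, ?_⟩
  · rw [← measureReal_congr (Ioc_ae_eq_Icc (μ := ν)), ← measureReal_Iic_sub_Iic hab, hmass]
  · rw [← setIntegral_congr_set (Ioc_ae_eq_Icc (μ := ν)), ← intervalIntegral.integral_of_le hab,
      ← intervalIntegral.integral_Iic_sub_Iic hid.integrableOn hid.integrableOn, hmean]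

end Window

section Disjointed

lemma disjointed_eq_of_le_of_le {ι α : Type*} [PartialOrder ι] [LocallyFiniteOrderBot ι]
    [GeneralizedBooleanAlgebra α] {f g : ι → α} (hle : disjointed f ≤ g) (hge : g ≤ f) :
    disjointed g = disjointed f := by
  refine (disjointed_unique (disjoint_disjointed_of_lt f) (le_antisymm ?_ ?_)).symm
  · exact partialSups_mono hle
  · exact (partialSups_mono hge).trans_eq (partialSups_disjointed f).symm

variable {α : Type*}

lemma disjointed_eq_sdiff_biUnion_range (f : ℕ → Set α) (n : ℕ) :
    disjointed f n = f n \ ⋃ j ∈ Finset.range n, f j := by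
  simp [disjointed_eq_inter_compl, Set.sdiff_eq]

lemma disjointed_succ_eq_sdiff (f : ℕ → Set α) (n : ℕ) :
    disjointed f (n + 1) = disjointed (fun i ↦ f (i + 1)) n \ f 0 := by
  ext ω
  simp only [disjointed_eq_inter_compl, mem_inter_iff, mem_iInter, mem_sdiff, mem_compl_iff,
    Nat.forall_lt_succ_left]
  tauto

end Disjointed

section Support

variable {μ G : Measure ℝ}

lemma msupport_eq_support_s13 (μ : Measure ℝ) : msupport μ = μ.support := by
  ext; simp [msupport, Measure.mem_support_iff_forall, pos_iff_ne_zero]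

lemma msupport_volume_restrict_Icc {a b : ℝ} (hab : a < b) :
    msupport (volume.restrict (Icc a b)) = Icc a b := by
  rw [msupport_eq_support_s13]
  refine Subset.antisymm
    (Measure.support_subset_of_isClosed isClosed_Icc (ae_restrict_mem measurableSet_Icc)) ?_
  have hIoo := Measure.interior_inter_support (μ := volume) (s := Icc a b)
  rw [Measure.support_eq_univ, inter_univ, interior_Icc] at hIoo
  exact (closure_Ioo hab.ne).ge.trans (closure_minimal hIoo Measure.isClosed_support)

lemma ae_mem_msupport (μ : Measure ℝ) : ∀ᵐ ω ∂μ, ω ∈ msupport μ :=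
  msupport_eq_support_s13 μ ▸ Measure.support_mem_ae

lemma IsMPC.ae_mem_Icc (hG : IsMPC μ G) : ∀ᵐ ω ∂G, ω ∈ Icc (0 : ℝ) 1 :=
  (ae_mem_msupport G).mono fun _ hω ↦ hG.2.1 hω

lemma measure_singleton_ne_zero_of_finite_msupport (hfin : (msupport μ).Finite) {z : ℝ}
    (hz : z ∈ msupport μ) : μ {z} ≠ 0 := by
  intro h0
  have hnhds : (msupport μ \ {z})ᶜ ∈ nhds z :=
    (hfin.sdiff.isClosed.isOpen_compl).mem_nhds (by simp)
  refine hz _ hnhds (measure_mono_null (t := {z} ∪ (msupport μ)ᶜ) (fun ω hω ↦ ?_)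
    (measure_union_null h0 (ae_mem_msupport μ)))
  exact (em (ω = z)).imp id fun hne hmem ↦ hω ⟨hmem, hne⟩

lemma sum_measure_singleton_eq_one [IsProbabilityMeasure μ] {ι : Type*} {s : Finset ι} {x : ι → ℝ}
    (hx : InjOn x s) (hsupp : msupport μ = x '' s) : ∑ i ∈ s, μ {x i} = 1 := by
  classical
  calc ∑ i ∈ s, μ {x i} = μ (s.image x : Finset ℝ) := by
        rw [← sum_measure_singleton, Finset.sum_image hx]
    _ = 1 := by
        rw [← mem_ae_iff_prob_eq_one (Finset.measurableSet _), Finset.coe_image, ← hsupp]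
        exact ae_mem_msupport μ

end Support

section Prior

variable {f : ℝ → ℝ}

lemma densMeasure_absolutelyContinuous : densMeasure f ≪ volume.restrict (Icc 0 1) :=
  withDensity_absolutelyContinuous _ _

instance : NullSingletonClass (densMeasure f) :=
  ⟨fun z ↦ densMeasure_absolutelyContinuous (measure_singleton z)⟩

lemma IsPrior.restrict_absolutelyContinuous (hf : IsPrior f) :
    volume.restrict (Icc 0 1) ≪ densMeasure f := by
  refine withDensity_absolutelyContinuous' hf.meas.ennreal_ofReal.aemeasurable ?_
  filter_upwards [ae_restrict_mem measurableSet_Icc] with z hz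
  simpa using hf.pos z hz

lemma IsPrior.msupport_densMeasure (hf : IsPrior f) : msupport (densMeasure f) = Icc 0 1 := by
  rw [← msupport_volume_restrict_Icc zero_lt_one, msupport_eq_support_s13, msupport_eq_support_s13]
  exact densMeasure_absolutelyContinuous.support_mono.antisymm
    hf.restrict_absolutelyContinuous.support_mono

end Prior

section ConvexOrder

/-- The convex order on finite measures on the line with finite first moment: `G` is obtained from
`ν` by averaging. It extends the relation `IsMPC` from distributions on `[0, 1]` to measures of
arbitrary mass, and tests only the convex functions `ω ↦ (t - ω)⁺`. -/
structure ConvexLE (G ν : Measure ℝ) : Prop where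
  mass_eq : G.real univ = ν.real univ
  mean_eq : ∫ ω, ω ∂G = ∫ ω, ω ∂ν
  potential_le : ∀ t, potential G t ≤ potential ν t

lemma IsMPC.convexLE {μ G : Measure ℝ} [IsProbabilityMeasure μ] (hG : IsMPC μ G)
    (hμ01 : ∀ᵐ ω ∂μ, ω ∈ Icc (0 : ℝ) 1) : ConvexLE G μ := by
  have hG01 := hG.ae_mem_Icc
  obtain ⟨_, _, hle, heq⟩ := hG
  have hidG := integrable_id_of_ae_mem_Icc hG01
  have hidμ := integrable_id_of_ae_mem_Icc hμ01
  have hmcdfG {t : ℝ} (ht : 0 ≤ t) := integral_mcdf_eq_potential hidG (hG01.mono fun _ h ↦ h.1) ht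
  have hmcdfμ {t : ℝ} (ht : 0 ≤ t) := integral_mcdf_eq_potential hidμ (hμ01.mono fun _ h ↦ h.1) ht
  have htopG {t : ℝ} (ht : 1 ≤ t) : potential G t = t - ∫ ω, ω ∂G := by
    simpa using potential_of_ae_le hidG (hG01.mono fun _ h ↦ h.2.trans ht)
  have htopμ {t : ℝ} (ht : 1 ≤ t) : potential μ t = t - ∫ ω, ω ∂μ := by
    simpa using potential_of_ae_le hidμ (hμ01.mono fun _ h ↦ h.2.trans ht)
  have hmean : ∫ ω, ω ∂G = ∫ ω, ω ∂μ := by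
    rw [hmcdfG zero_le_one, hmcdfμ zero_le_one, htopG le_rfl, htopμ le_rfl] at heq
    linarith
  refine ⟨by simp, hmean, fun t ↦ ?_⟩
  rcases lt_or_ge t 0 with ht0 | ht0
  · rw [potential_eq_zero_of_ae_ge (hG01.mono fun _ h ↦ ht0.le.trans h.1)]
    exact potential_nonneg μ t
  rcases le_or_gt t 1 with ht1 | ht1
  · simpa only [hmcdfG ht0, hmcdfμ ht0] using hle t ⟨ht0, ht1⟩
  · rw [htopG ht1.le, htopμ ht1.le, hmean]

lemma measureReal_singleton_mul_le_integral {α : Type*} [MeasurableSpace α]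
    [MeasurableSingletonClass α] {μ : Measure α} {g : α → ℝ} (hg : Integrable g μ) (hg0 : 0 ≤ g)
    (x : α) : μ.real {x} * g x ≤ ∫ ω, g ω ∂μ := by
  simpa only [integral_singleton, smul_eq_mul] using
    setIntegral_le_integral (s := {x}) hg (.of_forall hg0)

variable {G ν : Measure ℝ} [IsFiniteMeasure G] [IsFiniteMeasure ν] {a b c d x : ℝ}

namespace ConvexLE

lemma exists_Icc_mass_mean_eq_atom [NullSingletonClass ν] (h : ConvexLE G ν)
    (hG : Integrable (fun ω ↦ ω) G) (hcd : c ≤ d) (hν : ∀ᵐ ω ∂ν, ω ∈ Icc c d)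
    (hx : 0 < G.real {x}) :
    ∃ a ∈ Icc c d, ∃ b ∈ Icc c d, ν.real (Icc a b) = G.real {x} ∧
      ∫ ω in Icc a b, ω ∂ν = G.real {x} * x := by
  have hid := integrable_id_of_ae_mem_Icc hν
  refine exists_Icc_measureReal_eq_and_setIntegral_eq hcd hν
    ⟨hx, (measureReal_mono (subset_univ _)).trans_eq h.mass_eq⟩ (fun t ht ↦ ?_) fun t ht ↦ ?_
  · have hpot : G.real {x} * (t - x) ≤ t * G.real {x} - ∫ ω in Iic t, ω ∂ν :=
      calc G.real {x} * (t - x) ≤ G.real {x} * max (t - x) 0 := by gcongr; exact le_max_left _ _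
        _ ≤ potential G t := measureReal_singleton_mul_le_integral (integrable_max_sub_zero hG t)
            (fun _ ↦ le_max_right _ _) x
        _ ≤ potential ν t := h.potential_le t
        _ = t * G.real {x} - ∫ ω in Iic t, ω ∂ν := by rw [potential_eq hid, ht]
    linarith
  · have hpot : G.real {x} * (x - t) ≤ (∫ ω in Ioi t, ω ∂ν) - t * G.real {x} :=
      calc G.real {x} * (x - t) ≤ G.real {x} * max (x - t) 0 := by gcongr; exact le_max_left _ _
        _ ≤ ∫ ω, max (ω - t) 0 ∂G := measureReal_singleton_mul_le_integral
            (hG.sub (integrable_const t)).pos_part (fun _ ↦ le_max_right _ _) x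
        _ = potential G t + ((∫ ω, ω ∂ν) - t * ν.real univ) := by
            rw [← potential_add_eq_integral_max hG, h.mean_eq, h.mass_eq]
        _ ≤ potential ν t + ((∫ ω, ω ∂ν) - t * ν.real univ) := by gcongr; exact h.potential_le t
        _ = (∫ ω in Ioi t, ω ∂ν) - t * G.real {x} := by
            rw [potential_add_eq_setIntegral_Ioi hid, ht]
    linarith

lemma restrict_compl (h : ConvexLE G ν) (hG : Integrable (fun ω ↦ ω) G)
    (hν : Integrable (fun ω ↦ ω) ν) {A : Set ℝ} (hA : MeasurableSet A) (hAab : A ⊆ Icc a b)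
    (hmass : G.real A = ν.real (Icc a b)) (hmean : ∫ ω in A, ω ∂G = ∫ ω in Icc a b, ω ∂ν) :
    ConvexLE (G.restrict Aᶜ) (ν.restrict (Icc a b)ᶜ) := by
  have hIcc : MeasurableSet (Icc a b) := measurableSet_Icc
  have hsplitG := potential_restrict_add_compl hG hA
  have hsplitν := potential_restrict_add_compl hν hIcc
  have hmemG : ∀ᵐ ω ∂G.restrict A, ω ∈ Icc a b := (ae_restrict_mem hA).mono hAab
  have hmemν : ∀ᵐ ω ∂ν.restrict (Icc a b), ω ∈ Icc a b := ae_restrict_mem hIcc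
  have hleft (t : ℝ) (ht : t ≤ a) :
      potential (G.restrict Aᶜ) t ≤ potential (ν.restrict (Icc a b)ᶜ) t := by
    have hGt := potential_eq_zero_of_ae_ge (hmemG.mono fun _ h ↦ ht.trans h.1)
    have hνt := potential_eq_zero_of_ae_ge (hmemν.mono fun _ h ↦ ht.trans h.1)
    linarith [hsplitG t, hsplitν t, h.potential_le t]
  have hright (t : ℝ) (ht : b ≤ t) :
      potential (G.restrict Aᶜ) t ≤ potential (ν.restrict (Icc a b)ᶜ) t := by
    have hGt := potential_of_ae_le hG.restrict (hmemG.mono fun _ h ↦ h.2.trans ht)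
    have hνt := potential_of_ae_le hν.restrict (hmemν.mono fun _ h ↦ h.2.trans ht)
    rw [measureReal_restrict_apply_univ] at hGt hνt
    rw [hmass, hmean] at hGt
    linarith [hsplitG t, hsplitν t, h.potential_le t]
  refine ⟨?_, ?_, fun t ↦ ?_⟩
  · simp only [measureReal_restrict_apply_univ, measureReal_compl hA, measureReal_compl hIcc,
      h.mass_eq, hmass]
  · have hmeanG := integral_add_compl hA hG
    have hmeanν := integral_add_compl hIcc hν
    linarith [h.mean_eq]
  rcases le_total t a with hta | hat
  · exact hleft t hta
  rcases le_total b t with hbt | htb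
  · exact hright t hbt
  -- Between the endpoints the larger potential is affine and the smaller one convex.
  have hgap : ν.restrict (Icc a b)ᶜ (Ioc a b) = 0 := by
    refine measure_mono_null Ioc_subset_Icc_self ?_
    rw [Measure.restrict_apply hIcc, inter_compl_self, measure_empty]
  exact potential_le_potential_of_measure_Ioc_eq_zero hG.restrict hν.restrict hgap
    (hleft a le_rfl) (hright b le_rfl) ⟨hat, htb⟩

lemma exists_Icc_restrict_compl [NullSingletonClass ν] (h : ConvexLE G ν)
    (hG : Integrable (fun ω ↦ ω) G) (hcd : c ≤ d) (hν : ∀ᵐ ω ∂ν, ω ∈ Icc c d)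
    (hx : 0 < G.real {x}) :
    ∃ a ∈ Icc c d, ∃ b ∈ Icc c d, ν.real (Icc a b) = G.real {x} ∧
      ∫ ω in Icc a b, ω ∂ν = G.real {x} * x ∧
      ConvexLE (G.restrict {x}ᶜ) (ν.restrict (Icc a b)ᶜ) := by
  obtain ⟨a, ha, b, hb, hmass, hmean⟩ := h.exists_Icc_mass_mean_eq_atom hG hcd hν hx
  have hid := integrable_id_of_ae_mem_Icc hν
  have hpos : ν (Icc a b) ≠ 0 := (measureReal_ne_zero_iff).1 (hmass.trans_ne hx.ne')
  have haverage : ⨍ ω in Icc a b, ω ∂ν = x := by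
    rw [setAverage_eq, hmass, hmean, smul_eq_mul, inv_mul_cancel_left₀ hx.ne']
  have hxab : x ∈ Icc a b := haverage ▸ (convex_Icc a b).set_average_mem isClosed_Icc hpos
    (measure_ne_top ν _) (ae_restrict_mem measurableSet_Icc) hid.integrableOn
  refine ⟨a, ha, b, hb, hmass, hmean, h.restrict_compl hG hid (measurableSet_singleton x)
    (singleton_subset_iff.2 hxab) hmass.symm ?_⟩
  rw [hmean, integral_singleton, smul_eq_mul]

lemma exists_seq_Icc_disjointed [NullSingletonClass ν] (h : ConvexLE G ν)
    (hG : Integrable (fun ω ↦ ω) G) (hcd : c ≤ d) (hν : ∀ᵐ ω ∂ν, ω ∈ Icc c d) {k : ℕ}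
    {x : ℕ → ℝ} (hx : InjOn x (Iio k)) (hpos : ∀ i < k, 0 < G.real {x i}) :
    ∃ a b : ℕ → ℝ, (∀ i, a i ∈ Icc c d ∧ b i ∈ Icc c d) ∧ ∀ i < k,
      ν.real (disjointed (fun j ↦ Icc (a j) (b j)) i) = G.real {x i} ∧
      ∫ ω in disjointed (fun j ↦ Icc (a j) (b j)) i, ω ∂ν = G.real {x i} * x i := by
  induction k generalizing G ν x with
  | zero => exact ⟨fun _ ↦ c, fun _ ↦ c, by simp [hcd], by simp⟩
  | succ k ih =>
    obtain ⟨a₀, ha₀, b₀, hb₀, hmass, hmean, h'⟩ :=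
      h.exists_Icc_restrict_compl hG hcd hν (hpos 0 k.succ_pos)
    have hatom (i : ℕ) (hi : i < k) :
        (G.restrict {x 0}ᶜ).real {x (i + 1)} = G.real {x (i + 1)} := by
      have hne : x (i + 1) ≠ x 0 := hx.ne (Nat.succ_lt_succ hi) k.succ_pos i.succ_ne_zero
      rw [measureReal_restrict_apply (measurableSet_singleton _),
        inter_eq_self_of_subset_left (singleton_subset_iff.2 hne)]
    obtain ⟨a, b, hmem, hab⟩ := ih h' hG.restrict (ae_restrict_of_ae hν) (x := fun i ↦ x (i + 1))
      (fun i hi j hj hij ↦ Nat.succ_injective (hx (Nat.succ_lt_succ hi) (Nat.succ_lt_succ hj) hij))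
      fun i hi ↦ (hatom i hi).symm ▸ hpos (i + 1) (Nat.succ_lt_succ hi)
    refine ⟨fun | 0 => a₀ | i + 1 => a i, fun | 0 => b₀ | i + 1 => b i,
      Nat.rec ⟨ha₀, hb₀⟩ fun i _ ↦ hmem i, ?_⟩
    rintro (_ | i) hi
    · rw [disjointed_zero]
      exact ⟨hmass, hmean⟩
    have hi : i < k := Nat.lt_of_succ_lt_succ hi
    have hmeas := MeasurableSet.disjointed (fun j ↦ measurableSet_Icc (a := a j) (b := b j)) i
    obtain ⟨hmass_i, hmean_i⟩ := hab i hi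
    rw [hatom i hi] at hmass_i hmean_i
    rw [measureReal_restrict_apply hmeas, ← Set.sdiff_eq] at hmass_i
    rw [Measure.restrict_restrict hmeas, ← Set.sdiff_eq] at hmean_i
    rw [disjointed_succ_eq_sdiff]
    exact ⟨hmass_i, hmean_i⟩

end ConvexLE

end ConvexOrder

section Laminar

lemma isLaminar_closure_disjointed {I : ℕ → Set ℝ} (hclosed : ∀ n, IsClosed (I n))
    (hconvex : ∀ n, Convex ℝ (I n)) (k : ℕ) : IsLaminar k fun n ↦ closure (disjointed I n) := by
  have hhull : disjointed (fun n ↦ convexHull ℝ (closure (disjointed I n))) = disjointed I :=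
    disjointed_eq_of_le_of_le (fun n ↦ subset_closure.trans (subset_convexHull ℝ _)) fun n ↦
      convexHull_min (closure_minimal (disjointed_subset I n) (hclosed n)) (hconvex n)
  intro n _
  rw [← disjointed_eq_sdiff_biUnion_range (fun n ↦ convexHull ℝ (closure (disjointed I n))), hhull]

lemma measure_frontier_disjointed {α : Type*} [TopologicalSpace α] [MeasurableSpace α]
    [OpensMeasurableSpace α] {μ : Measure α} {I : ℕ → Set α}
    (h : ∀ n, μ (frontier (I n)) = 0) (n : ℕ) : μ (frontier (disjointed I n)) = 0 := by
  refine disjointedRec (p := fun s ↦ μ (frontier s) = 0) (fun s i hs ↦ ?_) (h n)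
  rw [Set.sdiff_eq]
  exact null_frontier_inter hs (by rw [frontier_compl, h i])

lemma closure_disjointed_Icc_ae_eq {μ : Measure ℝ} [NullSingletonClass μ] (a b : ℕ → ℝ) (n : ℕ) :
    closure (disjointed (fun j ↦ Icc (a j) (b j)) n) =ᵐ[μ]
      disjointed (fun j ↦ Icc (a j) (b j)) n := by
  refine closure_ae_eq_of_null_frontier (measure_frontier_disjointed (fun j ↦ ?_) n)
  rcases le_or_gt (a j) (b j) with hab | hab
  · rw [frontier_Icc hab]
    exact (toFinite _).measure_zero μ
  · rw [Icc_eq_empty hab.not_ge, frontier_empty, measure_empty]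

end Laminar

lemma isDetRep_of_sum_measure_eq_one {μ : Measure ℝ} [IsProbabilityMeasure μ]
    (hμ : msupport μ = Icc 0 1) {k : ℕ} {B : ℕ → Set ℝ} (hclosed : ∀ i, IsClosed (B i))
    (hsub : ∀ i, B i ⊆ Icc 0 1) (hdisj : Pairwise fun i j ↦ AEDisjoint μ (B i) (B j))
    (hmass : ∑ i ∈ Finset.range k, μ (B i) = 1) : IsDetRep μ k B := by
  refine ⟨fun i _ ↦ ⟨hclosed i, hsub i⟩, (iUnion₂_subset fun i _ ↦ hsub i).antisymm ?_,
    fun i _ j _ hij ↦ hdisj hij⟩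
  have hunion : IsClosed (⋃ i ∈ Finset.range k, B i) :=
    isClosed_biUnion_finset fun i _ ↦ hclosed i
  rw [← hμ, msupport_eq_support_s13]
  refine Measure.support_subset_of_isClosed hunion
    ((mem_ae_iff_prob_eq_one hunion.measurableSet).2 ?_)
  rw [← hmass]
  exact measure_biUnion_finset₀ (fun i _ j _ hij ↦ hdisj hij)
    fun i _ ↦ (hclosed i).measurableSet.nullMeasurableSet

theorem mpc_induces_laminar_representation_general {μ G : Measure ℝ} [IsProbabilityMeasure μ]
    [NullSingletonClass μ] (hμ : msupport μ = Icc 0 1) (hG : IsMPC μ G) {k : ℕ} {x : ℕ → ℝ}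
    (hx : InjOn x (Iio k)) (hsupp : msupport G = x '' Iio k) :
    ∃ B : ℕ → Set ℝ, IsDetRep μ k B ∧
      (∀ i < k, μ (B i) = G {x i} ∧ condMean μ (B i) = x i) ∧ IsLaminar k B := by
  have : IsProbabilityMeasure G := hG.1
  have hμ01 : ∀ᵐ ω ∂μ, ω ∈ Icc (0 : ℝ) 1 := hμ ▸ ae_mem_msupport μ
  have hatom (i : ℕ) (hi : i < k) : 0 < G.real {x i} :=
    ENNReal.toReal_pos (measure_singleton_ne_zero_of_finite_msupport
      (hsupp ▸ (finite_Iio k).image x) (hsupp ▸ mem_image_of_mem x hi)) (measure_ne_top G _)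
  obtain ⟨a, b, hmem, hab⟩ := (hG.convexLE hμ01).exists_seq_Icc_disjointed
    (integrable_id_of_ae_mem_Icc hG.ae_mem_Icc) zero_le_one hμ01 hx hatom
  set I : ℕ → Set ℝ := fun j ↦ Icc (a j) (b j)
  have hae (i : ℕ) : closure (disjointed I i) =ᵐ[μ] disjointed I i :=
    closure_disjointed_Icc_ae_eq a b i
  have hmass (i : ℕ) (hi : i < k) : μ (closure (disjointed I i)) = G {x i} :=
    (measure_congr (hae i)).trans ((measureReal_eq_measureReal_iff).1 (hab i hi).1)
  have hmean (i : ℕ) (hi : i < k) : ∫ ω in closure (disjointed I i), ω ∂μ = G.real {x i} * x i :=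
    (setIntegral_congr_set (hae i)).trans (hab i hi).2
  refine ⟨fun i ↦ closure (disjointed I i), isDetRep_of_sum_measure_eq_one hμ
    (fun i ↦ isClosed_closure) (fun i ↦ ?_) (fun i j hij ↦ ?_) ?_, fun i hi ↦ ⟨hmass i hi, ?_⟩,
    isLaminar_closure_disjointed (fun _ ↦ isClosed_Icc) (fun _ ↦ convex_Icc _ _) k⟩
  · exact closure_minimal ((disjointed_subset I i).trans
      (Icc_subset_Icc (hmem i).1.1 (hmem i).2.2)) isClosed_Icc
  · exact (disjoint_disjointed I hij).aedisjoint.congr (hae i) (hae j)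
  · rw [Finset.sum_congr rfl fun i hi ↦ hmass i (Finset.mem_range.1 hi)]
    exact sum_measure_singleton_eq_one (by simpa using hx) (by simpa using hsupp)
  · rw [condMean, hmass i hi, hmean i hi]
    exact mul_div_cancel_left₀ _ (hatom i hi).ne'

lemma injOn_Iio_of_lt_add_one {α : Type*} [Preorder α] {x : ℕ → α} {k : ℕ}
    (hx : ∀ i, i + 1 < k → x i < x (i + 1)) : InjOn x (Iio k) :=
  (strictMonoOn_of_lt_add_one ordConnected_Iio fun i _ _ hi ↦ hx i hi).injOn

/-- a finitely supported MPC of the prior induces a laminar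
representation. -/
theorem mpc_induces_laminar_representation
    (f : ℝ → ℝ) (hf : IsPrior f)
    (G : Measure ℝ) (hG : IsMPC (densMeasure f) G)
    (k : ℕ) (hk : 0 < k) (x : ℕ → ℝ)
    (hxmono : ∀ i, i + 1 < k → x i < x (i+1))
    (hsupp : msupport G = x '' {i | i < k}) :
    ∃ B : ℕ → Set ℝ,
      (∀ i < k, IsClosed (B i) ∧ B i ⊆ Icc (0:ℝ) 1) ∧
      (⋃ i ∈ Finset.range k, B i) = Icc (0:ℝ) 1 ∧
      (∀ i < k, ∀ j < k, i ≠ j → densMeasure f (B i ∩ B j) = 0) ∧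
      (∀ i < k, densMeasure f (B i) = G {x i} ∧
        condMean (densMeasure f) (B i) = x i) ∧
      (∀ i < k,
        B i = closure ((convexHull ℝ (B i)) \ ⋃ j ∈ Finset.range i, convexHull ℝ (B j))) := by
  have : IsProbabilityMeasure (densMeasure f) := ⟨hf.prob⟩
  obtain ⟨B, ⟨hclosed, hcover, hnull⟩, hmean, hlaminar⟩ :=
    mpc_induces_laminar_representation_general hf.msupport_densMeasure hG
      (injOn_Iio_of_lt_add_one hxmono) hsupp
  exact ⟨B, hclosed, hcover, hnull, hmean, hlaminar⟩

end VerifiableDisclosure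
end
end
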